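/- Let S be a commutative ring and R an S-algebra such that the S-module R is reflexive (i.e. the evaluation map ev_R : R → Hom_S(Hom_S(R,S), S) is bijective). Let W' = Hom_S(R,S) be the left R-module with action (a·f)(x) = f(xa). Then the ring homomorphism ψ : Rᵒᵖ → End_R(W'), defined by (ψ(r)(f))(x) = f(rx), is bijective. -/

import Mathlib

/- STATEMENT 5: Let S be a commutative ring and R an S-algebra such that the S-module R
is reflexive. Let W' = Hom_S(R,S) with left R-action (a·f)(x) = f(xa). Then the ring
homomorphism ψ : Rᵒᵖ → End_R(W'), (ψ(r)(f))(x) = f(rx), is bijective. -/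

universe u v

/-- The evaluation map `R → Hom_S(Hom_S(R,S), S)` over a commutative ring `S`. -/
def evalFunComm (S : Type u) [CommRing S] (X : Type v) [AddCommGroup X] [Module S X] :
    X → ((X →ₗ[S] S) →ₗ[S] S) := fun x =>
  { toFun := fun f => f x
    map_add' := fun _ _ => rfl
    map_smul' := fun _ _ => rfl }

/-- The left `R`-action on `W' = Hom_S(R,S)`: `(a · f) x = f (x * a)`. -/
noncomputable def lAct {S : Type u} [CommRing S] {R : Type v} [Ring R] [Algebra S R]
    (a : R) (f : R →ₗ[S] S) : R →ₗ[S] S :=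
  f.comp (LinearMap.mulRight S a)

/-- The map `ψ : Rᵒᵖ → End(W')` underlying the statement: `(ψ r f) x = f (r * x)`. -/
noncomputable def psi {S : Type u} [CommRing S] {R : Type v} [Ring R] [Algebra S R]
    (r : R) (f : R →ₗ[S] S) : R →ₗ[S] S :=
  f.comp (LinearMap.mulLeft S r)

/-! Let `x · f = f ∘ₗ mulRight S x`. An additive endomorphism `T` of `Hom_S(R, M)` commuting with
this action satisfies `T f x = (x · T f) 1 = T (x · f) 1`, so it is determined by the functional
`f ↦ T f 1`. This functional is `S`-linear because `S` acts through `R`, so by reflexivity it is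
evaluation at some `r`, and then `T f x = (x · f) r = f (r * x)`. -/

section HomAlgebra

open LinearMap (applyₗ applyₗ_apply_apply mulLeft mulRight)

variable {S R M : Type*} [CommSemiring S] [Semiring R] [Algebra S R] [AddCommMonoid M] [Module S M]

theorem smul_eq_comp_mulRight_algebraMap (s : S) (f : R →ₗ[S] M) :
    s • f = f ∘ₗ mulRight S (algebraMap S R s) := by
  ext x
  calc s • f x = f (s • x) := (map_smul f s x).symm
    _ = f (x * algebraMap S R s) := by rw [Algebra.smul_def, Algebra.commutes]

theorem map_smul_of_map_comp_mulRight {T : (R →ₗ[S] M) → (R →ₗ[S] M)}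
    (hT : ∀ (a : R) (f : R →ₗ[S] M), T (f ∘ₗ mulRight S a) = T f ∘ₗ mulRight S a)
    (s : S) (f : R →ₗ[S] M) : T (s • f) = s • T f := by
  rw [smul_eq_comp_mulRight_algebraMap, hT, ← smul_eq_comp_mulRight_algebraMap]

theorem apply_eq_map_comp_mulRight_apply_one {T : (R →ₗ[S] M) → (R →ₗ[S] M)}
    (hT : ∀ (a : R) (f : R →ₗ[S] M), T (f ∘ₗ mulRight S a) = T f ∘ₗ mulRight S a)
    (f : R →ₗ[S] M) (x : R) : T f x = T (f ∘ₗ mulRight S x) 1 := by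
  rw [hT, LinearMap.comp_apply, LinearMap.mulRight_apply, one_mul]

theorem comp_mulLeft_injective
    (hev : Function.Injective (applyₗ : R →ₗ[S] (R →ₗ[S] M) →ₗ[S] M)) :
    Function.Injective (fun (r : R) (f : R →ₗ[S] M) => f ∘ₗ mulLeft S r) := by
  intro r r' h
  refine hev (LinearMap.ext fun f => ?_)
  have h_one : f (r * 1) = f (r' * 1) := LinearMap.congr_fun (congrFun h f) 1
  simpa only [mul_one, applyₗ_apply_apply] using h_one

theorem exists_eq_comp_mulLeft
    (hev : Function.Surjective (applyₗ : R →ₗ[S] (R →ₗ[S] M) →ₗ[S] M))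
    {T : (R →ₗ[S] M) → (R →ₗ[S] M)} (hadd : ∀ f g, T (f + g) = T f + T g)
    (hT : ∀ (a : R) (f : R →ₗ[S] M), T (f ∘ₗ mulRight S a) = T f ∘ₗ mulRight S a) :
    ∃ r : R, T = fun f => f ∘ₗ mulLeft S r := by
  let T' : (R →ₗ[S] M) →ₗ[S] (R →ₗ[S] M) :=
    { toFun := T
      map_add' := hadd
      map_smul' := map_smul_of_map_comp_mulRight hT }
  obtain ⟨r, hr⟩ := hev (applyₗ 1 ∘ₗ T')
  have apply_r (f : R →ₗ[S] M) : f r = T f 1 := LinearMap.congr_fun hr f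
  refine ⟨r, funext fun f => LinearMap.ext fun x => ?_⟩
  calc T f x = T (f ∘ₗ mulRight S x) 1 := apply_eq_map_comp_mulRight_apply_one hT f x
    _ = (f ∘ₗ mulRight S x) r := (apply_r _).symm

theorem psi_bijective_general
    (hrefl : Function.Bijective (applyₗ : R →ₗ[S] (R →ₗ[S] M) →ₗ[S] M)) :
    Function.Injective (fun (r : R) (f : R →ₗ[S] M) => f ∘ₗ mulLeft S r) ∧
    ∀ T : (R →ₗ[S] M) → (R →ₗ[S] M),
      ((∀ f g : R →ₗ[S] M, T (f + g) = T f + T g) ∧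
       (∀ (a : R) (f : R →ₗ[S] M), T (f ∘ₗ mulRight S a) = T f ∘ₗ mulRight S a)) →
      ∃ r : R, T = fun f => f ∘ₗ mulLeft S r :=
  ⟨comp_mulLeft_injective hrefl.injective,
    fun _ ⟨hadd, hT⟩ => exists_eq_comp_mulLeft hrefl.surjective hadd hT⟩

end HomAlgebra

theorem psi_bijective (S : Type u) [CommRing S] (R : Type v) [Ring R] [Algebra S R]
    (hrefl : Function.Bijective (evalFunComm S R)) :
    -- ψ is injective (as a map from Rᵒᵖ, equivalently from R), and
    Function.Injective (fun r : R => psi (S := S) r) ∧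
    -- ψ is surjective onto End_R(W'), the left R-linear endomorphisms of W':
    ∀ T : (R →ₗ[S] S) → (R →ₗ[S] S),
      ((∀ f g : R →ₗ[S] S, T (f + g) = T f + T g) ∧
       (∀ (a : R) (f : R →ₗ[S] S), T (lAct a f) = lAct a (T f))) →
      ∃ r : R, T = psi (S := S) r :=
  psi_bijective_general hrefl
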